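/- arXiv:1410.1015 — 3 statements merged into one kernel-verified Lean document; each statement's English description precedes it below -/
import Mathlib

section
/- Let η > 1, let u_η be the exact high-contrast solution on [−2,2], and let u_0, u_1, u_2, … be the asymptotic expansion terms. Then for every x ∈ [−2,2] the series Σ_{j=0}^{∞} η^{−j} u_j(x) converges absolutely and its sum equals u_η(x). -/
/-- The exact high-contrast solution on `[-2,2]`. -/
noncomputable def uEta (η : ℝ) : ℝ → ℝ := fun x =>
  if x < -1 then η / (1 + η) * (2 * (x + 2))
  else if x < 1 then η / (1 + η) * (2 * (1 + (x + 1) / η))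
  else η / (1 + η) * (2 * (1 + 2 / η + (x - 1)))

/-- The terms of the asymptotic expansion of `u_η`. -/
noncomputable def uTerm : ℕ → ℝ → ℝ
  | 0 => fun x => if x < -1 then 2 * (x + 2) else if x < 1 then 2 else 2 * x
  | j + 1 => fun x =>
      if x < -1 then (-1 : ℝ) ^ (j + 1) * (2 * (x + 2))
      else if x < 1 then (-1 : ℝ) ^ (j + 2) * (2 * x)
      else (-1 : ℝ) ^ (j + 1) * (2 * (x - 2))

/-- For `η > 1`, at every `x ∈ [-2,2]` the series `∑_j η^{-j} u_j(x)` converges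
absolutely and its sum equals `u_η(x)`. -/
theorem expansion_converges_pointwise (η : ℝ) (hη : 1 < η) :
    ∀ x ∈ Set.Icc (-2 : ℝ) 2,
      Summable (fun j : ℕ => |η⁻¹ ^ j * uTerm j x|) ∧
      ∑' j : ℕ, η⁻¹ ^ j * uTerm j x = uEta η x := by
  intro x _
  have h0 : 0 < η := by linarith
  have h1 : 1 + η ≠ 0 := by positivity
  have hr : |(-η⁻¹)| < 1 := by
    rw [abs_neg, abs_of_pos (by positivity)]
    exact inv_lt_one_of_one_lt₀ hη
  have key : ∀ j : ℕ, η⁻¹ ^ (j + 1) * uTerm (j + 1) x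
      = (-η⁻¹) ^ j * (η⁻¹ * uTerm 1 x) := by
    intro j
    rw [neg_pow]
    simp only [uTerm]
    split_ifs <;> ring
  have hs : HasSum (fun j : ℕ => η⁻¹ ^ (j + 1) * uTerm (j + 1) x)
      ((1 - (-η⁻¹))⁻¹ * (η⁻¹ * uTerm 1 x)) := by
    simp_rw [key]
    exact (hasSum_geometric_of_abs_lt_one hr).mul_right _
  have hs' := (hasSum_nat_add_iff (f := fun j : ℕ => η⁻¹ ^ j * uTerm j x) 1).1 hs
  refine ⟨hs'.summable.abs, ?_⟩
  rw [hs'.tsum_eq]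
  have h2 : (1 - (-η⁻¹))⁻¹ = η / (1 + η) := by
    have : 1 - (-η⁻¹) = (1 + η) / η := by field_simp; ring
    rw [this, inv_div]
  rw [h2]
  simp only [Finset.sum_range_one, uTerm, uEta]
  split_ifs <;> field_simp <;> ring
end

section
/- Let η > 1, let u_η be the exact high-contrast solution on [−2,2], and let u_0, u_1, u_2, … be the asymptotic expansion terms. Then for every integer J ≥ 0 and every x ∈ [−2,2], the truncation error satisfies |u_η(x) − Σ_{j=0}^{J} η^{−j} u_j(x)| ≤ 2/(η^J (η − 1)); in particular the partial sums converge to u_η uniformly on [−2,2]. -/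
/-- The common spatial profile of the higher-order terms. -/
noncomputable def wProf (x : ℝ) : ℝ :=
  if x < -1 then 2 * (x + 2) else if x < 1 then -(2 * x) else 2 * (x - 2)

lemma uTerm_succ_eq (j : ℕ) (x : ℝ) : uTerm (j + 1) x = (-1) ^ (j + 1) * wProf x := by
  simp only [uTerm, wProf]
  split_ifs <;> ring

lemma abs_wProf_le {x : ℝ} (hx : x ∈ Set.Icc (-2 : ℝ) 2) : |wProf x| ≤ 2 := by
  obtain ⟨h1, h2⟩ := hx
  unfold wProf
  rw [abs_le]
  split_ifs <;> constructor <;> linarith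

lemma remainder_eq (η : ℝ) (hη : 1 < η) (x : ℝ) (J : ℕ) :
    uEta η x - ∑ j ∈ Finset.range (J + 1), η⁻¹ ^ j * uTerm j x =
      -((-1) ^ J * η⁻¹ ^ J * (wProf x / (1 + η))) := by
  have h0 : η ≠ 0 := by linarith
  have h1 : 1 + η ≠ 0 := by linarith
  induction J with
  | zero =>
    simp only [zero_add, Finset.sum_range_one, pow_zero, one_mul, uEta, uTerm, wProf]
    split_ifs <;> field_simp <;> ring
  | succ J ih =>
    rw [Finset.sum_range_succ, ← sub_sub, ih, uTerm_succ_eq, pow_succ, pow_succ]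
    field_simp
    ring

lemma remainder_bound (η : ℝ) (hη : 1 < η) (J : ℕ) (x : ℝ) (hx : x ∈ Set.Icc (-2 : ℝ) 2) :
    |uEta η x - ∑ j ∈ Finset.range (J + 1), η⁻¹ ^ j * uTerm j x| ≤
        2 / (η ^ J * (η - 1)) := by
  have h0 : 0 < η := by linarith
  have h1 : 0 < η - 1 := by linarith
  have hp : 0 < η ^ J := by positivity
  rw [remainder_eq η hη, abs_neg, abs_mul, abs_mul, abs_pow, abs_neg, abs_one, one_pow, one_mul,
    abs_div, abs_of_pos (show 0 < 1 + η by linarith),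
    abs_of_pos (show 0 < η⁻¹ ^ J by positivity)]
  have e : η⁻¹ ^ J * (|wProf x| / (1 + η)) = |wProf x| / (η ^ J * (1 + η)) := by
    rw [inv_pow]; field_simp
  rw [e]
  have hw := abs_wProf_le hx
  gcongr
  linarith

/-- For `η > 1`, the truncation error of the expansion satisfies
`|u_η(x) - ∑_{j=0}^J η^{-j} u_j(x)| ≤ 2/(η^J (η - 1))` on `[-2,2]`; in particular the
partial sums converge uniformly to `u_η` on `[-2,2]`. -/
theorem truncation_error_bound (η : ℝ) (hη : 1 < η) :
    (∀ J : ℕ, ∀ x ∈ Set.Icc (-2 : ℝ) 2,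
      |uEta η x - ∑ j ∈ Finset.range (J + 1), η⁻¹ ^ j * uTerm j x| ≤
        2 / (η ^ J * (η - 1))) ∧
    TendstoUniformlyOn
      (fun (J : ℕ) (x : ℝ) => ∑ j ∈ Finset.range (J + 1), η⁻¹ ^ j * uTerm j x)
      (uEta η) Filter.atTop (Set.Icc (-2 : ℝ) 2) := by
  refine ⟨remainder_bound η hη, ?_⟩
  rw [Metric.tendstoUniformlyOn_iff]
  intro ε hε
  have h0 : 0 < η := by linarith
  have ht : Filter.Tendsto (fun J : ℕ => 2 / (η ^ J * (η - 1))) Filter.atTop (nhds 0) :=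
    Filter.Tendsto.const_div_atTop
      ((tendsto_pow_atTop_atTop_of_one_lt hη).atTop_mul_const (by linarith)) 2
  filter_upwards [ht.eventually (gt_mem_nhds hε)] with J hJ x hx
  rw [Real.dist_eq]
  exact (remainder_bound η hη J x hx).trans_lt hJ
end

section
/- Let 0 < δ < 1, let χ be the one-dimensional harmonic characteristic function on [−1,1], and let f : [−1,1] → ℝ be continuous. Let w_1 : [−1,−δ] → ℝ be continuously differentiable on [−1,−δ], twice differentiable on (−1,−δ) with −w_1″(x) = f(x) for all x ∈ (−1,−δ), and w_1(−1) = w_1(−δ) = 0; let w_2 : [δ,1] → ℝ be continuously differentiable on [δ,1], twice differentiable on (δ,1) with −w_2″(x) = f(x) for all x ∈ (δ,1), and w_2(δ) = w_2(1) = 0. Set c_0 = ((1−δ)/2)·∫_{−1}^{1} f(x)χ(x) dx. Then the compatibility condition for the interior Neumann problem holds: (c_0/(1−δ) + w_1′(−δ)) − (−c_0/(1−δ) + w_2′(δ)) = ∫_{−δ}^{δ} f(x) dx, i.e., the one-sided derivative from the left at −δ of u_0 = c_0χ + w_1 minus the one-sided derivative from the right at δ of u_0 = c_0χ + w_2 equals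 ∫_{−δ}^{δ} f. -/
/-- The one-dimensional harmonic characteristic function on `[-1,1]`:
piecewise linear, equal to `1` on `[-δ,δ]` and vanishing at `±1`. -/
noncomputable def chi (δ : ℝ) : ℝ → ℝ := fun x =>
  if x ≤ -δ then (x + 1) / (1 - δ)
  else if x ≤ δ then 1
  else (1 - x) / (1 - δ)

/-- Compatibility condition for the interior Neumann problem: with
`c₀ = ((1-δ)/2) ∫ f χ`, the one-sided derivative of `u₀ = c₀χ + w₁` from the left at
`-δ` minus the one-sided derivative of `u₀ = c₀χ + w₂` from the right at `δ` equals
`∫_{-δ}^{δ} f`. -/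
theorem neumann_compatibility (δ : ℝ) (hδ0 : 0 < δ) (hδ1 : δ < 1)
    (f : ℝ → ℝ) (hf : ContinuousOn f (Set.Icc (-1 : ℝ) 1))
    (w₁ w₁' : ℝ → ℝ)
    (hw₁d : ∀ x ∈ Set.Icc (-1 : ℝ) (-δ),
      HasDerivWithinAt w₁ (w₁' x) (Set.Icc (-1 : ℝ) (-δ)) x)
    (hw₁c : ContinuousOn w₁' (Set.Icc (-1 : ℝ) (-δ)))
    (hw₁dd : ∀ x ∈ Set.Ioo (-1 : ℝ) (-δ), HasDerivAt w₁' (-(f x)) x)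
    (hw₁a : w₁ (-1) = 0) (hw₁b : w₁ (-δ) = 0)
    (w₂ w₂' : ℝ → ℝ)
    (hw₂d : ∀ x ∈ Set.Icc δ (1 : ℝ),
      HasDerivWithinAt w₂ (w₂' x) (Set.Icc δ (1 : ℝ)) x)
    (hw₂c : ContinuousOn w₂' (Set.Icc δ (1 : ℝ)))
    (hw₂dd : ∀ x ∈ Set.Ioo δ (1 : ℝ), HasDerivAt w₂' (-(f x)) x)
    (hw₂a : w₂ δ = 0) (hw₂b : w₂ 1 = 0)
    (c₀ : ℝ) (hc₀ : c₀ = ((1 - δ) / 2) * ∫ x in (-1 : ℝ)..1, f x * chi δ x) :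
    (c₀ / (1 - δ) + w₁' (-δ)) - (-(c₀ / (1 - δ)) + w₂' δ) = ∫ x in (-δ : ℝ)..δ, f x := by
  have h1 : 0 < 1 - δ := by linarith
  have hne : 1 - δ ≠ 0 := h1.ne'
  have hfL : ContinuousOn f (Set.Icc (-1) (-δ)) :=
    hf.mono (Set.Icc_subset_Icc le_rfl (by linarith))
  have hfM : ContinuousOn f (Set.Icc (-δ) δ) :=
    hf.mono (Set.Icc_subset_Icc (by linarith) (by linarith))
  have hfR : ContinuousOn f (Set.Icc δ 1) :=
    hf.mono (Set.Icc_subset_Icc (by linarith) le_rfl)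
  have iL : IntervalIntegrable (fun x => f x * ((x + 1) / (1 - δ))) MeasureTheory.volume (-1) (-δ) := by
    apply ContinuousOn.intervalIntegrable_of_Icc (by linarith)
    exact hfL.mul (by fun_prop)
  have iM : IntervalIntegrable f MeasureTheory.volume (-δ) δ :=
    ContinuousOn.intervalIntegrable_of_Icc (by linarith) hfM
  have iR : IntervalIntegrable (fun x => f x * ((1 - x) / (1 - δ))) MeasureTheory.volume δ 1 := by
    apply ContinuousOn.intervalIntegrable_of_Icc (by linarith)
    exact hfR.mul (by fun_prop)
  have eL : Set.EqOn (fun x => f x * ((x + 1) / (1 - δ))) (fun x => f x * chi δ x)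
      (Set.uIoc (-1) (-δ)) := by
    intro x hx
    rw [Set.uIoc_of_le (by linarith)] at hx
    simp [chi, hx.2]
  have eM : Set.EqOn f (fun x => f x * chi δ x) (Set.uIoc (-δ) δ) := by
    intro x hx
    rw [Set.uIoc_of_le (by linarith)] at hx
    simp [chi, hx.2, not_le.mpr hx.1]
  have eR : Set.EqOn (fun x => f x * ((1 - x) / (1 - δ))) (fun x => f x * chi δ x)
      (Set.uIoc δ 1) := by
    intro x hx
    rw [Set.uIoc_of_le (by linarith)] at hx
    have h2 : ¬ x ≤ -δ := by linarith [hx.1]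
    simp [chi, h2, not_le.mpr hx.1]
  have jL := iL.congr eL
  have jM := iM.congr eM
  have jR := iR.congr eR
  have vL : ∫ x in (-1 : ℝ)..(-δ), f x * ((x + 1) / (1 - δ)) = -w₁' (-δ) := by
    rw [intervalIntegral.integral_eq_sub_of_hasDerivAt_of_le (by linarith)
      (f := fun x => (w₁ x - (x + 1) * w₁' x) / (1 - δ)) ?_ ?_ iL]
    · simp only [hw₁a, hw₁b]
      field_simp
      ring
    · have : ContinuousOn w₁ (Set.Icc (-1) (-δ)) := fun x hx => (hw₁d x hx).continuousWithinAt
      fun_prop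
    · intro x hx
      have a := (hw₁d x (Set.Ioo_subset_Icc_self hx)).hasDerivAt (Icc_mem_nhds hx.1 hx.2)
      have b := (a.sub (((hasDerivAt_id x).add_const 1).mul (hw₁dd x hx))).div_const (1 - δ)
      refine b.congr_deriv ?_
      simp only [id]
      field_simp
      ring
  have vR : ∫ x in δ..(1 : ℝ), f x * ((1 - x) / (1 - δ)) = w₂' δ := by
    rw [intervalIntegral.integral_eq_sub_of_hasDerivAt_of_le (by linarith)
      (f := fun x => (-w₂ x - (1 - x) * w₂' x) / (1 - δ)) ?_ ?_ iR]
    · simp only [hw₂a, hw₂b]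
      field_simp
      ring
    · have : ContinuousOn w₂ (Set.Icc δ 1) := fun x hx => (hw₂d x hx).continuousWithinAt
      fun_prop
    · intro x hx
      have a := (hw₂d x (Set.Ioo_subset_Icc_self hx)).hasDerivAt (Icc_mem_nhds hx.1 hx.2)
      have b := (a.neg.sub (((hasDerivAt_id x).const_sub 1).mul (hw₂dd x hx))).div_const (1 - δ)
      refine b.congr_deriv ?_
      simp only [id]
      field_simp
      ring
  have tot : ∫ x in (-1 : ℝ)..1, f x * chi δ x
      = -w₁' (-δ) + (∫ x in (-δ : ℝ)..δ, f x) + w₂' δ := by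
    rw [← intervalIntegral.integral_add_adjacent_intervals (jL.trans jM) jR,
      ← intervalIntegral.integral_add_adjacent_intervals jL jM, ← vL, ← vR]
    congr 1
    · congr 1
      · exact (intervalIntegral.integral_congr_ae (Filter.Eventually.of_forall eL)).symm
      · exact (intervalIntegral.integral_congr_ae (Filter.Eventually.of_forall eM)).symm
    · exact (intervalIntegral.integral_congr_ae (Filter.Eventually.of_forall eR)).symm
  rw [tot] at hc₀
  have : c₀ / (1 - δ) = (-w₁' (-δ) + (∫ x in (-δ : ℝ)..δ, f x) + w₂' δ) / 2 := by
    rw [hc₀]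
    field_simp
  rw [this]
  ring
end
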